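/- arXiv:2309.06686 — 3 statements merged into one kernel-verified Lean document; each statement's English description precedes it below -/
import Mathlib

section
/- For every natural number N ≥ 6, the 6×6 real symmetric matrix T_N(0) (i.e. T_N(x) evaluated at x = (0,0,0)) is positive definite. -/
open Matrix

noncomputable section

/-- `a = 2^{-N}` -/
def a (N : ℕ) : ℝ := (2 : ℝ)⁻¹ ^ N

/-- `b = (-2)^{-N}` -/
def b (N : ℕ) : ℝ := (-2 : ℝ)⁻¹ ^ N

/-- `c = (2/3)^N` -/
def c (N : ℕ) : ℝ := (2 / 3 : ℝ) ^ N

def M1 (N : ℕ) : Matrix (Fin 3) (Fin 3) ℝ :=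
  !![1, a N, a N; a N, 1, b N; a N, b N, 1]

def δ1 (N : ℕ) : Matrix (Fin 3) (Fin 3) ℝ :=
  !![0, a N, a N; a N, (a N) ^ 2, (a N) ^ 2; a N, (a N) ^ 2, (a N) ^ 2]

def δ2 (N : ℕ) : Matrix (Fin 3) (Fin 3) ℝ :=
  !![(a N) ^ 2, a N, a N * b N; a N, 0, b N; a N * b N, b N, (b N) ^ 2]

def δ3 (N : ℕ) : Matrix (Fin 3) (Fin 3) ℝ :=
  !![(a N) ^ 2, a N * b N, a N; a N * b N, (b N) ^ 2, b N; a N, b N, 0]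

def Mx (N : ℕ) : Matrix (Fin 3) (Fin 3) ℝ :=
  (Real.sqrt 3 * c N) • (!![0, 0, 0; 0, -1, 0; 0, 0, 1] + δ3 N - δ2 N)

def Mz (N : ℕ) : Matrix (Fin 3) (Fin 3) ℝ :=
  c N • (!![-2, 0, 0; 0, 1, 0; 0, 0, 1] - (2 : ℝ) • δ1 N + δ2 N + δ3 N)

def S (x : Fin 3 → ℝ) : Matrix (Fin 3) (Fin 3) ℝ :=
  !![0, x 0, x 1; -x 0, 0, x 2; -x 1, -x 2, 0]

/-- The 6×6 Choi-matrix representation `T_N(x)` in 2×2 block form. -/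
def T (N : ℕ) (x : Fin 3 → ℝ) : Matrix (Fin 3 ⊕ Fin 3) (Fin 3 ⊕ Fin 3) ℝ :=
  Matrix.fromBlocks (M1 N + Mz N) (Mx N + S x) (Mx N - S x) (M1 N - Mz N)

end


lemma posDef_of_dd {n : Type*} [Fintype n] [DecidableEq n] (A : Matrix n n ℝ) (hA : A.IsHermitian)
    (h : ∀ i, ∑ j ∈ Finset.univ.erase i, ‖A i j‖ < A i i) : A.PosDef := by
  rw [hA.posDef_iff_eigenvalues_pos]
  intro i
  have hm : Module.End.HasEigenvalue (Matrix.toLin' A) (hA.eigenvalues i) := by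
    rw [Module.End.hasEigenvalue_iff_mem_spectrum, Matrix.spectrum_toLin']
    exact hA.eigenvalues_mem_spectrum_real i
  obtain ⟨k, hk⟩ := eigenvalue_mem_ball hm
  rw [Metric.mem_closedBall, Real.dist_eq] at hk
  have := h k
  have := neg_abs_le (hA.eigenvalues i - A k k)
  linarith

lemma mul_bd {x y p q : ℝ} (hx : |x| ≤ p) (hy : |y| ≤ q) : |x * y| ≤ p * q := by
  rw [abs_mul]
  exact mul_le_mul hx hy (abs_nonneg _) ((abs_nonneg _).trans hx)

set_option maxHeartbeats 4000000 in
theorem stmt_1 (N : ℕ) (hN : 6 ≤ N) : (T N 0).PosDef := by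
  have ha : |a N| ≤ 1/64 := by
    rw [a, abs_pow]
    refine (pow_le_pow_of_le_one (by positivity) ?_ hN).trans ?_ <;>
      norm_num [abs_of_pos]
  have hb : |b N| ≤ 1/64 := by
    rw [b, abs_pow]
    refine (pow_le_pow_of_le_one (by positivity) ?_ hN).trans ?_ <;>
      norm_num [abs_inv, abs_neg]
  have hc : |c N| ≤ 64/729 := by
    rw [c, abs_pow]
    refine (pow_le_pow_of_le_one (by positivity) ?_ hN).trans ?_ <;>
      norm_num [abs_div]
  have h3 : |√3| ≤ 2 := by
    rw [abs_of_nonneg (Real.sqrt_nonneg _), Real.sqrt_le_left (by norm_num)]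
    norm_num
  have hs := mul_bd h3 hc
  have haa := mul_bd ha ha
  have hab := mul_bd ha hb
  have hbb := mul_bd hb hb
  have c1 := mul_bd hc ha
  have c2 := mul_bd hc hb
  have c3 := mul_bd hc haa
  have c4 := mul_bd hc hab
  have c5 := mul_bd hc hbb
  have s1 := mul_bd hs ha
  have s2 := mul_bd hs hb
  have s3 := mul_bd hs haa
  have s4 := mul_bd hs hab
  have s5 := mul_bd hs hbb
  apply posDef_of_dd
  · ext i j
    rcases i with i | i <;> rcases j with j | j <;> fin_cases i <;> fin_cases j <;>
      simp [T, M1, Mx, Mz, S, δ1, δ2, δ3]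
  · have hS : S 0 = 0 := by
      ext i j; fin_cases i <;> fin_cases j <;> simp [S]
    have key : ∀ i, ∑ j, ‖T N 0 i j‖ < 2 * T N 0 i i ∧ 0 ≤ T N 0 i i := by
      simp only [abs_le] at *
      have z1 : ∀ i j, i ≠ j → |(M1 N + Mz N) i j| ≤ 1/32 := by
        intro i j hij
        fin_cases i <;> fin_cases j <;> first | exact absurd rfl hij | skip
        all_goals
          simp [M1, Mz, δ1, δ2, δ3, abs_le]
          constructor <;> linarith
      have z2 : ∀ i j, i ≠ j → |(M1 N - Mz N) i j| ≤ 1/32 := by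
        intro i j hij
        fin_cases i <;> fin_cases j <;> first | exact absurd rfl hij | skip
        all_goals
          simp [M1, Mz, δ1, δ2, δ3, abs_le]
          constructor <;> linarith
      have z3 : ∀ i j, i ≠ j → |Mx N i j| ≤ 1/64 := by
        intro i j hij
        fin_cases i <;> fin_cases j <;> first | exact absurd rfl hij | skip
        all_goals
          simp [Mx, δ1, δ2, δ3, -abs_mul]
          try (rw [abs_le]; constructor <;> linarith)
      have z4 : ∀ i, |Mx N i i| ≤ 1/5 := by
        intro i
        fin_cases i
        all_goals
          simp [Mx, δ1, δ2, δ3, -abs_mul]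
          try (rw [abs_le]; constructor <;> linarith)
      have z5 : ∀ i, 3/4 ≤ (M1 N + Mz N) i i := by
        intro i
        fin_cases i
        all_goals
          simp [M1, Mz, δ1, δ2, δ3]
          linarith
      have z6 : ∀ i, 3/4 ≤ (M1 N - Mz N) i i := by
        intro i
        fin_cases i
        all_goals
          simp [M1, Mz, δ1, δ2, δ3]
          linarith
      clear * - z1 z2 z3 z4 z5 z6 hS
      rintro (i | i)
      · have e := abs_of_nonneg ((by norm_num : (0:ℝ) ≤ 3/4).trans (z5 i))
        have := z5 i
        have := z4 i
        simp only [T, hS, add_zero, sub_zero, Fintype.sum_sum_type, Fin.sum_univ_three,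
          fromBlocks_apply₁₁, fromBlocks_apply₁₂, Real.norm_eq_abs]
        refine ⟨?_, by linarith⟩
        obtain rfl | rfl | rfl : i = 0 ∨ i = 1 ∨ i = 2 := by omega
        · linarith [z1 0 1 (by decide), z1 0 2 (by decide), z3 0 1 (by decide), z3 0 2 (by decide)]
        · linarith [z1 1 0 (by decide), z1 1 2 (by decide), z3 1 0 (by decide), z3 1 2 (by decide)]
        · linarith [z1 2 0 (by decide), z1 2 1 (by decide), z3 2 0 (by decide), z3 2 1 (by decide)]
      · have e := abs_of_nonneg ((by norm_num : (0:ℝ) ≤ 3/4).trans (z6 i))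
        have := z6 i
        have := z4 i
        simp only [T, hS, add_zero, sub_zero, Fintype.sum_sum_type, Fin.sum_univ_three,
          fromBlocks_apply₂₁, fromBlocks_apply₂₂, Real.norm_eq_abs]
        refine ⟨?_, by linarith⟩
        obtain rfl | rfl | rfl : i = 0 ∨ i = 1 ∨ i = 2 := by omega
        · linarith [z2 0 1 (by decide), z2 0 2 (by decide), z3 0 1 (by decide), z3 0 2 (by decide)]
        · linarith [z2 1 0 (by decide), z2 1 2 (by decide), z3 1 0 (by decide), z3 1 2 (by decide)]
        · linarith [z2 2 0 (by decide), z2 2 1 (by decide), z3 2 0 (by decide), z3 2 1 (by decide)]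
    intro i
    obtain ⟨h1, h2⟩ := key i
    rw [← Finset.add_sum_erase _ _ (Finset.mem_univ i), Real.norm_eq_abs (T N 0 i i),
      abs_of_nonneg h2] at h1
    linarith
end

section
/- For each N ∈ {2, 3, 4, 5}, there exists x = (x₁,x₂,x₃) ∈ ℝ³ such that the 6×6 real matrix T_N(x) is positive definite. -/
open Matrix

noncomputable section

/-- The quadratic form with the lower half rescaled by `√3`. -/
def form (a b c s t u1 u2 u3 w1 w2 w3 : ℝ) : ℝ :=
  (1 + c * (-2 + 2 * a ^ 2)) * u1 ^ 2
  + (1 + c * (1 - 2 * a ^ 2 + b ^ 2)) * (u2 ^ 2 + u3 ^ 2)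
  + 2 * (a + c * (-a + a * b)) * u1 * (u2 + u3)
  + 2 * (b + c * (2 * b - 2 * a ^ 2)) * u2 * u3
  + 3 * ((1 - c * (-2 + 2 * a ^ 2)) * w1 ^ 2
  + (1 - c * (1 - 2 * a ^ 2 + b ^ 2)) * (w2 ^ 2 + w3 ^ 2)
  + 2 * (a - c * (-a + a * b)) * w1 * (w2 + w3)
  + 2 * (b - c * (2 * b - 2 * a ^ 2)) * w2 * w3)
  + 6 * ((c * (a * b - a) + s) * u1 * w2 + (c * (a - a * b) - s) * u1 * w3
    + (c * (a * b - a) - s) * u2 * w1 + (c * (a - a * b) + s) * u3 * w1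
    + c * (-1 + b ^ 2) * u2 * w2 + c * (1 - b ^ 2) * u3 * w3
    + t * u2 * w3 - t * u3 * w2)

end

lemma posDef_aux (N : ℕ) (s t : ℝ)
    (h : ∀ u1 u2 u3 w1 w2 w3 : ℝ,
      1 / 100 * (u1 ^ 2 + (u2 + u3) ^ 2 + (w2 - w3) ^ 2
        + (w1 ^ 2 + (w2 + w3) ^ 2 + (u2 - u3) ^ 2)) ≤
      form (a N) (b N) (c N) s t u1 u2 u3 w1 w2 w3) :
    (T N ![√3 * s, -(√3 * s), √3 * t]).PosDef := by
  have h3 : √3 * √3 = 3 := Real.mul_self_sqrt (by norm_num)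
  apply Matrix.PosDef.of_dotProduct_mulVec_pos
  · ext i j
    rcases i with i | i <;> rcases j with j | j <;> fin_cases i <;> fin_cases j <;>
      simp [T, M1, Mz, Mx, S, δ1, δ2, δ3] <;> ring
  · intro x hx
    have hform : star x ⬝ᵥ (T N ![√3 * s, -(√3 * s), √3 * t] *ᵥ x) =
        form (a N) (b N) (c N) s t (x (.inl 0)) (x (.inl 1)) (x (.inl 2))
          (√3 / 3 * x (.inr 0)) (√3 / 3 * x (.inr 1)) (√3 / 3 * x (.inr 2)) := by
      have h2 : √3 ^ 2 = 3 := by rw [sq, h3]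
      simp [T, M1, Mz, Mx, S, δ1, δ2, δ3, form, dotProduct, mulVec, Fin.sum_univ_three]
      ring_nf
      rw [h2]
      ring
    rw [hform]
    refine lt_of_lt_of_le ?_ (h _ _ _ _ _ _)
    by_contra hneg
    apply hx
    have e : ∀ y z : ℝ, (y + z) ^ 2 + (y - z) ^ 2 = 2 * y ^ 2 + 2 * z ^ 2 := by
      intro y z; ring
    have e1 := e (x (.inl 1)) (x (.inl 2))
    have e2 := e (√3 / 3 * x (.inr 1)) (√3 / 3 * x (.inr 2))
    have p : ∀ y : ℝ, (√3 / 3 * y) ^ 2 = y ^ 2 / 3 := by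
      intro y
      have : (√3 / 3 * y) ^ 2 = (√3 * √3) * y ^ 2 / 9 := by ring
      rw [this, h3]; ring
    have q0 := p (x (.inr 0))
    have q1 := p (x (.inr 1))
    have q2 := p (x (.inr 2))
    have s1 := sq_nonneg (x (.inl 0))
    have s2 := sq_nonneg (x (.inl 1))
    have s3 := sq_nonneg (x (.inl 2))
    have s4 := sq_nonneg (x (.inr 0))
    have s5 := sq_nonneg (x (.inr 1))
    have s6 := sq_nonneg (x (.inr 2))
    ext i
    rcases i with i | i <;> fin_cases i <;>
      exact pow_eq_zero_iff (two_ne_zero) |>.1 (le_antisymm (by simp only [Fin.mk_zero, Fin.mk_one, Fin.zero_eta, Fin.reduceFinMk]; linarith) (sq_nonneg _))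

lemma key2 : (T 2 ![√3 * (1/20), -(√3 * (1/20)), √3 * (1/20)]).PosDef := by
  apply posDef_aux
  intro u1 u2 u3 w1 w2 w3
  have h : 0 ≤ (47/300)*(u1 + (50/47)*(u2+u3) + (-30/47)*(w2-w3))^2
      + (857/1175)*((u2+u3) + (-1395/1714)*(w2-w3))^2
      + (16543/85700)*((w2-w3))^2
      + (549/100)*(w1 + (100/549)*(w2+w3) + (-40/549)*(u2-u3))^2
      + (44351/54900)*((w2+w3) + (-26195/44351)*(u2-u3))^2
      + (397037/2217550)*((u2-u3))^2 := by positivity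
  norm_num [form, a, b, c]
  linarith

lemma key3 : (T 3 ![√3 * (3/20), -(√3 * (3/20)), √3 * (-1/20)]).PosDef := by
  apply posDef_aux
  intro u1 u2 u3 w1 w2 w3
  have h : 0 ≤ (61/150)*(u1 + (25/122)*(u2+u3) + (195/244)*(w2-w3))^2
      + (3139/6100)*((u2+u3) + (-5235/6278)*(w2-w3))^2
      + (1249213/2511200)*((w2-w3))^2
      + (237/50)*(w1 + (25/237)*(w2+w3) + (-115/948)*(u2-u3))^2
      + (22213/23700)*((w2+w3) + (-42835/88852)*(u2-u3))^2
      + (16079217/35540800)*((u2-u3))^2 := by positivity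
  norm_num [form, a, b, c]
  linarith

lemma key4 : (T 4 ![√3 * (0), -(√3 * (0)), √3 * (1/5)]).PosDef := by
  apply posDef_aux
  intro u1 u2 u3 w1 w2 w3
  have h : 0 ≤ (3221/5400)*(u1 + (275/3221)*(u2+u3) + (-375/6442)*(w2-w3))^2
      + (807641/1288400)*((u2+u3) + (-1525915/1615282)*(w2-w3))^2
      + (742254769/1292225600)*((w2-w3))^2
      + (7507/1800)*(w1 + (400/7507)*(w2+w3) + (-125/15014)*(u2-u3))^2
      + (1864811/1501400)*((w2+w3) + (40305/7459244)*(u2-u3))^2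
      + (9760812419/17902185600)*((u2-u3))^2 := by positivity
  norm_num [form, a, b, c]
  linarith

lemma key5 : (T 5 ![√3 * (1/8), -(√3 * (1/8)), √3 * (1/8)]).PosDef := by
  apply posDef_aux
  intro u1 u2 u3 w1 w2 w3
  have h : 0 ≤ (23551/32400)*(u1 + (875/23551)*(u2+u3) + (23475/47102)*(w2-w3))^2
      + (90702703/169567200)*((u2+u3) + (-19296625/25915058)*(w2-w3))^2
      + (317080643773/373176835200)*((w2-w3))^2
      + (40817/10800)*(w1 + (1150/40817)*(w2+w3) + (-8375/81634)*(u2-u3))^2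
      + (15373949/12245100)*((w2+w3) + (638425/737949552)*(u2-u3))^2
      + (5694398159087/10626473548800)*((u2-u3))^2 := by positivity
  norm_num [form, a, b, c]
  linarith

theorem stmt_2 (N : ℕ) (hN : N ∈ ({2, 3, 4, 5} : Set ℕ)) :
    ∃ x : Fin 3 → ℝ, (T N x).PosDef := by
  simp only [Set.mem_insert_iff, Set.mem_singleton_iff] at hN
  rcases hN with rfl | rfl | rfl | rfl
  · exact ⟨_, key2⟩
  · exact ⟨_, key3⟩
  · exact ⟨_, key4⟩
  · exact ⟨_, key5⟩
end

section
/- For every natural number N ≥ 2, there exists x = (x₁,x₂,x₃) ∈ ℝ³ such that the 6×6 real matrix T_N(x) is positive definite. -/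
open Matrix

lemma core2 (r y0 y1 y2 z0 z1 z2 : ℝ) (hr : r ^ 2 = 3)
    (Y0 Y1 Y2 Z0 Z1 Z2 : ℝ)
    (h : ¬ (Y0 = 0 ∧ Y1 = 0 ∧ Y2 = 0 ∧ Z0 = 0 ∧ Z1 = 0 ∧ Z2 = 0)) :
    0 < 4/3 * (Y0^2+Y1^2+Y2^2+Z0^2+Z1^2+Z2^2) - 2/9*((Y0+Y1+Y2)^2+(Z0+Z1+Z2)^2)
      + 4/9 * (-2*(Y0^2-Z0^2) + (Y1^2-Z1^2) - 2*r*(Y1*Z1) + (Y2^2-Z2^2) + 2*r*(Y2*Z2)) := by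
  have e : 4/3 * (Y0^2+Y1^2+Y2^2+Z0^2+Z1^2+Z2^2) - 2/9*((Y0+Y1+Y2)^2+(Z0+Z1+Z2)^2)
      + 4/9 * (-2*(Y0^2-Z0^2) + (Y1^2-Z1^2) - 2*r*(Y1*Z1) + (Y2^2-Z2^2) + 2*r*(Y2*Z2))
      = 2/9*(Y0-(Y1+Y2))^2 + 4/9*((Z2-Z1)+r*(Y1+Y2)/2)^2 + 1/9*(Y1+Y2)^2
        + 8/9*((Y2-Y1)+r*(Z1+Z2)/4)^2 + 2*(Z0-(Z1+Z2)/9)^2 + 5/162*(Z1+Z2)^2 := by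
    linear_combination (-(1/9)*(Y1+Y2)^2 - 1/18*(Z1+Z2)^2)*hr
  rw [e]
  by_contra hn
  apply h
  have n1 := sq_nonneg (Y0-(Y1+Y2))
  have n2 := sq_nonneg ((Z2-Z1)+r*(Y1+Y2)/2)
  have n3 := sq_nonneg (Y1+Y2)
  have n4 := sq_nonneg ((Y2-Y1)+r*(Z1+Z2)/4)
  have n5 := sq_nonneg (Z0-(Z1+Z2)/9)
  have n6 := sq_nonneg (Z1+Z2)
  have m1 : Y0-(Y1+Y2) = 0 := pow_eq_zero_iff (two_ne_zero) |>.1 (by linarith)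
  have m2 : (Z2-Z1)+r*(Y1+Y2)/2 = 0 := pow_eq_zero_iff (two_ne_zero) |>.1 (by linarith)
  have m3 : Y1+Y2 = 0 := pow_eq_zero_iff (two_ne_zero) |>.1 (by linarith)
  have m4 : (Y2-Y1)+r*(Z1+Z2)/4 = 0 := pow_eq_zero_iff (two_ne_zero) |>.1 (by linarith)
  have m5 : Z0-(Z1+Z2)/9 = 0 := pow_eq_zero_iff (two_ne_zero) |>.1 (by linarith)
  have m6 : Z1+Z2 = 0 := pow_eq_zero_iff (two_ne_zero) |>.1 (by linarith)
  rw [m3] at m2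
  rw [m6] at m4
  refine ⟨?_, ?_, ?_, ?_, ?_, ?_⟩ <;> linarith

/-- the quadratic form -/
def Q (a b c r y0 y1 y2 z0 z1 z2 : ℝ) : ℝ :=
  (y0^2+y1^2+y2^2+2*a*y0*y1+2*a*y0*y2+2*b*y1*y2)
  + (z0^2+z1^2+z2^2+2*a*z0*z1+2*a*z0*z2+2*b*z1*z2)
  + c * (-2*((y0+a*y1+a*y2)^2-(z0+a*z1+a*z2)^2)
     + ((a*y0+y1+b*y2)^2-(a*z0+z1+b*z2)^2) - 2*r*((a*y0+y1+b*y2)*(a*z0+z1+b*z2))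
     + ((a*y0+b*y1+y2)^2-(a*z0+b*z1+z2)^2) + 2*r*((a*y0+b*y1+y2)*(a*z0+b*z1+z2)))

lemma Q2 (r y0 y1 y2 z0 z1 z2 : ℝ) (hr : r ^ 2 = 3)
    (h : ¬ (y0 = 0 ∧ y1 = 0 ∧ y2 = 0 ∧ z0 = 0 ∧ z1 = 0 ∧ z2 = 0)) :
    0 < Q (1/4) (1/4) (4/9) r y0 y1 y2 z0 z1 z2 := by
  have := core2 r y0 y1 y2 z0 z1 z2 hr (y0+y1/4+y2/4) (y0/4+y1+y2/4) (y0/4+y1/4+y2)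
    (z0+z1/4+z2/4) (z0/4+z1+z2/4) (z0/4+z1/4+z2) (by
      rintro ⟨h1, h2, h3, h4, h5, h6⟩
      apply h
      refine ⟨?_, ?_, ?_, ?_, ?_, ?_⟩ <;> linarith)
  unfold Q
  refine this.trans_eq ?_
  ring

lemma half (β c y0 y1 y2 : ℝ) (h1 : -(1/8) ≤ β) (h2 : β ≤ 1/8) (hc : 0 ≤ c) (hc' : c ≤ 8/27) :
    1/10 * (y0^2+y1^2+y2^2) ≤ (y0^2+y1^2+y2^2+2*β*y0*y1+2*β*y0*y2+2*β*y1*y2)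
      - 2*c*((y0+β*y1+β*y2)^2+(β*y0+y1+β*y2)^2+(β*y0+β*y1+y2)^2) := by
  have k1 : 0 ≤ (y0+β*y1+β*y2)^2+(β*y0+y1+β*y2)^2+(β*y0+β*y1+y2)^2 := by positivity
  have k2 := mul_le_mul_of_nonneg_right hc' k1
  have hs : 0 ≤ (y0+y1+y2)^2 := sq_nonneg _
  have ht : 0 ≤ (y0-y1)^2+(y1-y2)^2+(y0-y2)^2 := by positivity
  have A : 0 ≤ (1-β)*(1-16/27*(1-β)) - 1/10 := by nlinarith
  have B : 0 ≤ (1+2*β)*(1-16/27*(1+2*β)) - 1/10 := by nlinarith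
  have t1 := mul_nonneg A ht
  have t2 := mul_nonneg B hs
  nlinarith

lemma rot (r Y Z : ℝ) (hr : r^2 = 3) (s : ℝ) (hs : s^2 = 1) :
    -2*(Y^2+Z^2) ≤ (Y^2-Z^2) + s*(2*r*(Y*Z)) := by
  have := sq_nonneg (r*Y + s*Z)
  nlinarith [this, sq_nonneg (r*Y + s*Z)]

lemma Q3 (a b c r y0 y1 y2 z0 z1 z2 : ℝ) (hr : r ^ 2 = 3) (hab : a = b ∨ a = -b)
    (h1 : -(1/8) ≤ b) (h2 : b ≤ 1/8) (hc : 0 ≤ c) (hc' : c ≤ 8/27) :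
    1/10 * (y0^2+y1^2+y2^2) + 1/10 * (z0^2+z1^2+z2^2) ≤ Q a b c r y0 y1 y2 z0 z1 z2 := by
  have gen : ∀ y0 z0, 1/10 * (y0^2+y1^2+y2^2) + 1/10 * (z0^2+z1^2+z2^2)
      ≤ Q b b c r y0 y1 y2 z0 z1 z2 := by
    intro y0 z0
    have e1 := half b c y0 y1 y2 h1 h2 hc hc'
    have e2 := half b c z0 z1 z2 h1 h2 hc hc'
    have e3 := mul_le_mul_of_nonneg_left
      (rot r (b*y0+y1+b*y2) (b*z0+z1+b*z2) hr (-1) (by norm_num)) hc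
    have e4 := mul_le_mul_of_nonneg_left
      (rot r (b*y0+b*y1+y2) (b*z0+b*z1+z2) hr 1 (by norm_num)) hc
    have e5 := mul_nonneg hc (sq_nonneg (z0+b*z1+b*z2))
    unfold Q
    linarith
  rcases hab with rfl | rfl
  · exact gen y0 z0
  · have := gen (-y0) (-z0)
    unfold Q at *
    linarith

lemma T_form (N : ℕ) (v : Fin 3 ⊕ Fin 3 → ℝ) (hab : a N ^ 2 = b N ^ 2) :
    v ⬝ᵥ (T N 0 *ᵥ v) = Q (a N) (b N) (c N) (Real.sqrt 3) (v (.inl 0)) (v (.inl 1)) (v (.inl 2))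
      (v (.inr 0)) (v (.inr 1)) (v (.inr 2)) := by
  simp only [dotProduct, mulVec, T, Fintype.sum_sum_type, Fin.sum_univ_three, fromBlocks_apply₁₁,
    fromBlocks_apply₁₂, fromBlocks_apply₂₁, fromBlocks_apply₂₂]
  simp [M1, Mx, Mz, S, δ1, δ2, δ3, Q]
  ring

lemma pos_aux (N : ℕ) (hN : 2 ≤ N) (y0 y1 y2 z0 z1 z2 : ℝ)
    (h : ¬ (y0 = 0 ∧ y1 = 0 ∧ y2 = 0 ∧ z0 = 0 ∧ z1 = 0 ∧ z2 = 0)) :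
    0 < Q (a N) (b N) (c N) (Real.sqrt 3) y0 y1 y2 z0 z1 z2 := by
  have hr : Real.sqrt 3 ^ 2 = 3 := Real.sq_sqrt (by norm_num)
  rcases hN.eq_or_lt with rfl | h3
  · have := Q2 (Real.sqrt 3) y0 y1 y2 z0 z1 z2 hr h
    have ea : a 2 = 1/4 := by norm_num [a]
    have eb : b 2 = 1/4 := by norm_num [b]
    have ec : c 2 = 4/9 := by norm_num [c]
    rwa [ea, eb, ec]
  · have h3 : 3 ≤ N := h3
    have ha : a N ≤ 1/8 := by
      have : (2:ℝ)⁻¹ ^ N ≤ (2:ℝ)⁻¹ ^ 3 := pow_le_pow_of_le_one (by norm_num) (by norm_num) h3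
      unfold a; linarith
    have ha0 : 0 ≤ a N := by unfold a; positivity
    have hc0 : 0 ≤ c N := by unfold c; positivity
    have hc : c N ≤ 8/27 := by
      have : (2/3:ℝ) ^ N ≤ (2/3:ℝ) ^ 3 := pow_le_pow_of_le_one (by norm_num) (by norm_num) h3
      unfold c; linarith
    have hab : a N = b N ∨ a N = - b N := by
      have e : b N = (-1)^N * a N := by
        unfold a b; rw [← mul_pow]; norm_num
      rcases neg_one_pow_eq_or ℝ N with h | h <;> rw [h] at e
      · left; linarith
      · right; linarith
    have hb1 : -(1/8) ≤ b N := by rcases hab with h | h <;> linarith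
    have hb2 : b N ≤ 1/8 := by rcases hab with h | h <;> linarith
    refine lt_of_lt_of_le ?_ (Q3 (a N) (b N) (c N) _ y0 y1 y2 z0 z1 z2 hr hab hb1 hb2 hc0 hc)
    by_contra hn
    apply h
    have := sq_nonneg y0
    have := sq_nonneg y1
    have := sq_nonneg y2
    have := sq_nonneg z0
    have := sq_nonneg z1
    have := sq_nonneg z2
    refine ⟨?_, ?_, ?_, ?_, ?_, ?_⟩ <;>
      exact pow_eq_zero_iff (two_ne_zero) |>.1 (by linarith)

theorem stmt_3 (N : ℕ) (hN : 2 ≤ N) :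
    ∃ x : Fin 3 → ℝ, (T N x).PosDef := by
  refine ⟨0, ?_⟩
  have hab : a N ^ 2 = b N ^ 2 := by
    unfold a b
    rw [← pow_mul, ← pow_mul, mul_comm, pow_mul, pow_mul]
    norm_num
  refine PosDef.of_dotProduct_mulVec_pos ?_ ?_
  · ext i j
    rcases i with i | i <;> rcases j with j | j <;> fin_cases i <;> fin_cases j <;>
      simp [T, M1, Mx, Mz, S, δ1, δ2, δ3]
  · intro v hv
    rw [star_trivial, T_form N v hab]
    apply pos_aux N hN
    rintro ⟨h1, h2, h3, h4, h5, h6⟩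
    apply hv
    ext i
    rcases i with i | i <;> fin_cases i <;> simpa
end
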